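/- Let q be a nonzero complex number that is not a root of unity, with a fixed square root q^{1/2}, and let α : ℤ → ℂ have finite support. Define F(L) := Σ_{a ∈ ℤ} α(a) T_1(L, a; q) for nonnegative integers L. Then for every nonnegative integer L, (1 + q^L) Σ_{i≥0} q^{C(i,2)} [L choose i]_q F(i) = Σ_{a ∈ ℤ} α(a) (1 + q^a) q^{C(a,2)} [2L choose L-a]_q, where C(a,2) = a(a-1)/2 denotes the binomial coefficient. -/

import Mathlib

/-- The finite q-Pochhammer symbol `(a;q)_n`. -/
noncomputable def qPoch (a q : ℂ) (n : ℕ) : ℂ :=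
  ∏ j ∈ Finset.range n, (1 - a * q ^ j)

/-- The infinite q-Pochhammer symbol `(a;q)_∞`. -/
noncomputable def qPochInf (a q : ℂ) : ℂ :=
  ∏' j : ℕ, (1 - a * q ^ j)

/-- `1/(q;q)_n` for an integer `n`, with the convention that it is `0` for `n < 0`. -/
noncomputable def qPochInvZ (q : ℂ) (n : ℤ) : ℂ :=
  if 0 ≤ n then (qPoch q q n.toNat)⁻¹ else 0

/-- The q-trinomial coefficient `(L, b; a; q)_2`. -/
noncomputable def qTrinomial (L : ℕ) (b a : ℤ) (q : ℂ) : ℂ :=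
  ∑' n : ℕ, q ^ ((n : ℤ) * ((n : ℤ) + b)) * qPoch q q L * qPochInvZ q (n : ℤ) *
    qPochInvZ q ((n : ℤ) + a) * qPochInvZ q ((L : ℤ) - 2 * (n : ℤ) - a)

/-- The q-trinomial coefficient `T_n(L, a; q)`, where `s` is a fixed square root of `q`. -/
noncomputable def qTriT (n : ℤ) (L : ℕ) (a : ℤ) (q s : ℂ) : ℂ :=
  s ^ ((L : ℤ) * ((L : ℤ) - n) - a * (a - n)) * qTrinomial L (a - n) a q⁻¹

/-- The Gaussian (q-binomial) coefficient `[N choose k]_q`, zero unless `0 ≤ k ≤ N`. -/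
noncomputable def qBinom (N k : ℤ) (q : ℂ) : ℂ :=
  if 0 ≤ k ∧ k ≤ N then
    qPoch q q N.toNat * (qPoch q q k.toNat)⁻¹ * (qPoch q q (N - k).toNat)⁻¹
  else 0

/-- The quadratic form `Q(m,n) = 2m² + 6mn + 6n²` from Capparelli's theorems. -/
def Qcap (m n : ℕ) : ℕ := 2 * m ^ 2 + 6 * m * n + 6 * n ^ 2

/-!
In base `q⁻¹`, every factor `(q⁻¹; q⁻¹)_n` is `(q; q)_n` up to a sign and a power of `q`, so that
`T_1(i, a; q) = ∑ n, q ^ C(i - 2n - a, 2) (q)_i / ((q)_n (q)_{n+a} (q)_{i-2n-a})`. Inserting this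
into the left-hand side and substituting `i = B + n + a` makes the sum over `n` a q-Chu–Vandermonde
sum, with value `q ^ (C(a, 2) + B (B + a - 1)) [L choose B] [L choose B + a]`. Splitting the second
binomial by Pascal's rule, the sum over `B` becomes two further q-Chu–Vandermonde sums, namely
`[2L - 1 choose L + a - 1] + q ^ a [2L - 1 choose L + a]`. Multiplied by `1 + q ^ L`, this is
`(1 + q ^ a) [2L choose L - a]`. For `|a| > L` both sides vanish, so only finitely many `a`
contribute.
-/

lemma qPoch_succ (a q : ℂ) (n : ℕ) : qPoch a q (n + 1) = qPoch a q n * (1 - a * q ^ n) :=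
  Finset.prod_range_succ _ n

lemma qPoch_self_ne_zero {q : ℂ} (hroot : ∀ k : ℕ, 0 < k → q ^ k ≠ 1) (n : ℕ) :
    qPoch q q n ≠ 0 := by
  refine Finset.prod_ne_zero_iff.mpr fun j _ => sub_ne_zero.mpr ?_
  rw [← pow_succ']
  exact (hroot (j + 1) j.succ_pos).symm

lemma qPochInvZ_of_neg (q : ℂ) {n : ℤ} (hn : n < 0) : qPochInvZ q n = 0 :=
  if_neg hn.not_ge

lemma nonneg_of_qPochInvZ_ne_zero {q : ℂ} {n : ℤ} (h : qPochInvZ q n ≠ 0) : 0 ≤ n :=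
  not_lt.mp fun hn => h (qPochInvZ_of_neg q hn)

lemma qPochInvZ_natCast (q : ℂ) (n : ℕ) : qPochInvZ q n = (qPoch q q n)⁻¹ := by
  simp [qPochInvZ]

lemma qPochInvZ_sub_one {q : ℂ} (hroot : ∀ k : ℕ, 0 < k → q ^ k ≠ 1) (n : ℤ) :
    qPochInvZ q (n - 1) = (1 - q ^ n) * qPochInvZ q n := by
  rcases lt_trichotomy n 0 with hn | rfl | hn
  · rw [qPochInvZ_of_neg q hn, qPochInvZ_of_neg q (by lia), mul_zero]
  · rw [qPochInvZ_of_neg q (by lia), zpow_zero, sub_self, zero_mul]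
  · obtain ⟨k, rfl⟩ : ∃ k : ℕ, n = (k + 1 : ℕ) := ⟨(n - 1).toNat, by lia⟩
    have hk : 1 - q ^ (k + 1) ≠ 0 := sub_ne_zero.mpr (hroot (k + 1) k.succ_pos).symm
    rw [show ((k + 1 : ℕ) : ℤ) - 1 = k by lia, qPochInvZ_natCast, qPochInvZ_natCast, qPoch_succ,
      ← pow_succ', zpow_natCast, mul_inv, mul_left_comm, mul_inv_cancel₀ hk, mul_one]

lemma qBinom_eq_zero (q : ℂ) {N k : ℤ} (h : k < 0 ∨ N < k) : qBinom N k q = 0 :=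
  if_neg (by lia)

lemma qBinom_natCast (q : ℂ) (N : ℕ) (k : ℤ) :
    qBinom N k q = qPoch q q N * qPochInvZ q k * qPochInvZ q (N - k) := by
  rcases lt_or_ge k 0 with hk | hk
  · rw [qBinom_eq_zero q (.inl hk), qPochInvZ_of_neg q hk, mul_zero, zero_mul]
  rcases lt_or_ge (N : ℤ) k with hN | hN
  · rw [qBinom_eq_zero q (.inr hN), qPochInvZ_of_neg q (sub_neg.mpr hN), mul_zero]
  · simp [qBinom, qPochInvZ, hk, hN]

lemma qBinom_zero_zero (q : ℂ) : qBinom 0 0 q = 1 := by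
  simp [qBinom, qPoch]

lemma qBinom_symm (q : ℂ) (N : ℕ) (k : ℤ) : qBinom N (N - k) q = qBinom N k q := by
  rw [qBinom_natCast, qBinom_natCast, sub_sub_cancel, mul_right_comm]

lemma one_sub_pow_mul_qBinom {q : ℂ} (hroot : ∀ k : ℕ, 0 < k → q ^ k ≠ 1) (N : ℕ) (k : ℤ) :
    (1 - q ^ (N + 1)) * qBinom N k q = (1 - q ^ ((N : ℤ) + 1 - k)) * qBinom (N + 1) k q := by
  have hshift : (N : ℤ) - k = N + 1 - k - 1 := by ring
  rw [← Nat.cast_succ, qBinom_natCast, qBinom_natCast, qPoch_succ, Nat.cast_succ, hshift,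
    qPochInvZ_sub_one hroot]
  ring

lemma one_sub_pow_mul_qBinom_sub_one {q : ℂ} (hroot : ∀ k : ℕ, 0 < k → q ^ k ≠ 1)
    (N : ℕ) (k : ℤ) :
    (1 - q ^ (N + 1)) * qBinom N (k - 1) q = (1 - q ^ k) * qBinom (N + 1) k q := by
  have h := one_sub_pow_mul_qBinom hroot N (N + 1 - k)
  rwa [show (N : ℤ) + 1 - k = N - (k - 1) by ring, qBinom_symm,
    show (N : ℤ) - (k - 1) = (N + 1 : ℕ) - k by push_cast; ring, ← Nat.cast_succ, qBinom_symm,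
    sub_sub_cancel] at h

lemma qBinom_succ {q : ℂ} (hq : q ≠ 0) (hroot : ∀ k : ℕ, 0 < k → q ^ k ≠ 1) (N : ℕ) (k : ℤ) :
    qBinom (N + 1) k q = qBinom N (k - 1) q + q ^ k * qBinom N k q := by
  have hN : 1 - q ^ (N + 1) ≠ 0 := sub_ne_zero.mpr (hroot (N + 1) N.succ_pos).symm
  have hpow : q ^ k * q ^ ((N : ℤ) + 1 - k) = q ^ (N + 1) := by
    rw [← zpow_add₀ hq, add_sub_cancel, ← Nat.cast_succ, zpow_natCast]
  apply mul_left_cancel₀ hN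
  linear_combination -one_sub_pow_mul_qBinom_sub_one hroot N k -
    q ^ k * one_sub_pow_mul_qBinom hroot N k + qBinom (N + 1) k q * hpow

lemma qBinom_succ' {q : ℂ} (hq : q ≠ 0) (hroot : ∀ k : ℕ, 0 < k → q ^ k ≠ 1) (N : ℕ) (k : ℤ) :
    qBinom (N + 1) k q = q ^ ((N : ℤ) + 1 - k) * qBinom N (k - 1) q + qBinom N k q := by
  have hk : (N : ℤ) + 1 - k = N - (k - 1) := by ring
  have hk' : (N : ℤ) - (k - 1) - 1 = N - k := by ring
  rw [← Nat.cast_succ, ← qBinom_symm, Nat.cast_succ, qBinom_succ hq hroot, hk, hk', qBinom_symm,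
    qBinom_symm, add_comm]

lemma sum_qBinom_sub_one_mul_qBinom {q : ℂ} (hq : q ≠ 0) (M N K : ℕ) (a : ℤ) :
    ∑ n ∈ Finset.range (K + 1), q ^ ((n : ℤ) * (n + a)) *
        (q ^ ((M : ℤ) + 1 - n) * qBinom M (n - 1) q) * qBinom N (n + a) q =
      q ^ ((M : ℤ) + 1 + a) * ∑ n ∈ Finset.range K,
        q ^ ((n : ℤ) * (n + (a + 1))) * qBinom M n q * qBinom N (n + (a + 1)) q := by
  rw [Finset.sum_range_succ', qBinom_eq_zero q (k := ((0 : ℕ) : ℤ) - 1) (by lia), Finset.mul_sum,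
    mul_zero, mul_zero, zero_mul, add_zero]
  refine Finset.sum_congr rfl fun n _ => ?_
  have hpow : q ^ (((n : ℤ) + 1) * (n + 1 + a)) * q ^ ((M : ℤ) + 1 - (n + 1)) =
      q ^ ((M : ℤ) + 1 + a) * q ^ ((n : ℤ) * (n + (a + 1))) := by
    rw [← zpow_add₀ hq, ← zpow_add₀ hq]
    ring_nf
  rw [Nat.cast_succ, ← mul_assoc, hpow, add_sub_cancel_right,
    show (n : ℤ) + 1 + a = n + (a + 1) by ring]
  ring

lemma qBinom_vandermonde {q : ℂ} (hq : q ≠ 0) (hroot : ∀ k : ℕ, 0 < k → q ^ k ≠ 1)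
    (N : ℕ) {M K : ℕ} (hMK : M < K) (a : ℤ) :
    ∑ n ∈ Finset.range K, q ^ ((n : ℤ) * (n + a)) * qBinom M n q * qBinom N (n + a) q =
      qBinom (M + N) (M + a) q := by
  induction M generalizing K a with
  | zero =>
    rw [Finset.sum_eq_single_of_mem 0 (Finset.mem_range.mpr hMK)]
    · simp [qBinom_zero_zero]
    · intro n _ hn
      rw [qBinom_eq_zero q (N := (0 : ℕ)) (k := n) (by lia), mul_zero, zero_mul]
  | succ M ih =>
    obtain ⟨K, rfl⟩ := Nat.exists_eq_add_one_of_ne_zero (Nat.ne_zero_of_lt hMK)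
    have hpascal := qBinom_succ hq hroot (M + N) (M + 1 + a)
    rw [show (M : ℤ) + 1 + a - 1 = M + a by ring] at hpascal
    have hsplit (n : ℕ) : q ^ ((n : ℤ) * (n + a)) * qBinom (M + 1) n q * qBinom N (n + a) q =
        q ^ ((n : ℤ) * (n + a)) * (q ^ ((M : ℤ) + 1 - n) * qBinom M (n - 1) q) *
          qBinom N (n + a) q +
        q ^ ((n : ℤ) * (n + a)) * qBinom M n q * qBinom N (n + a) q := by
      rw [qBinom_succ' hq hroot]
      ring
    push_cast at hpascal ⊢
    simp only [hsplit, Finset.sum_add_distrib]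
    rw [sum_qBinom_sub_one_mul_qBinom hq, ih (Nat.lt_of_succ_lt_succ hMK),
      ih (Nat.lt_of_succ_lt hMK), show (M : ℤ) + (a + 1) = M + 1 + a by ring,
      add_right_comm (M : ℤ) 1 N, hpascal, add_comm]

lemma qBinom_mul_qBinom_add {q : ℂ} (hq : q ≠ 0) (hroot : ∀ k : ℕ, 0 < k → q ^ k ≠ 1)
    {L B : ℕ} (hB : B ≤ L) (a : ℤ) :
    qBinom L B q * qBinom L (B + a) q =
      ∑ n ∈ Finset.range (L + 1), q ^ ((n : ℤ) * (n + a)) * (qPoch q q L * qPochInvZ q n *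
        qPochInvZ q (n + a) * qPochInvZ q (B - n) * qPochInvZ q (L - B - a - n)) := by
  obtain ⟨N, rfl⟩ := Nat.exists_eq_add_of_le hB
  have hvandermonde := qBinom_vandermonde hq hroot N (Nat.lt_succ_of_le hB) a
  rw [← Nat.cast_add] at hvandermonde
  rw [← hvandermonde, Finset.mul_sum]
  refine Finset.sum_congr rfl fun n _ => ?_
  have hB0 := qPoch_self_ne_zero hroot B
  have hN0 := qPoch_self_ne_zero hroot N
  rw [qBinom_natCast, qBinom_natCast, qBinom_natCast, Nat.cast_add, add_sub_cancel_left,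
    sub_sub (N : ℤ), add_comm (a : ℤ), qPochInvZ_natCast q B, qPochInvZ_natCast q N]
  field_simp

lemma sum_qBinom_mul_qBinom_succ {q : ℂ} (hq : q ≠ 0) (hroot : ∀ k : ℕ, 0 < k → q ^ k ≠ 1)
    (M N : ℕ) (a : ℤ) :
    ∑ B ∈ Finset.range (M + 1),
        q ^ ((B : ℤ) * (B + a - 1)) * qBinom M B q * qBinom (N + 1) (B + a) q =
      qBinom (M + N) (M + a - 1) q + q ^ a * qBinom (M + N) (M + a) q := by
  have hsplit (B : ℕ) :
      q ^ ((B : ℤ) * (B + a - 1)) * qBinom M B q * qBinom (N + 1) (B + a) q =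
        q ^ ((B : ℤ) * (B + (a - 1))) * qBinom M B q * qBinom N (B + (a - 1)) q +
        q ^ a * (q ^ ((B : ℤ) * (B + a)) * qBinom M B q * qBinom N (B + a) q) := by
    have hpow : q ^ ((B : ℤ) * (B + (a - 1))) * q ^ ((B : ℤ) + a) =
        q ^ a * q ^ ((B : ℤ) * (B + a)) := by
      rw [← zpow_add₀ hq, ← zpow_add₀ hq]
      ring_nf
    rw [qBinom_succ hq hroot, add_sub_assoc]
    linear_combination qBinom M B q * qBinom N (B + a) q * hpow
  simp only [hsplit, Finset.sum_add_distrib, ← Finset.mul_sum]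
  rw [qBinom_vandermonde hq hroot N M.lt_succ_self, qBinom_vandermonde hq hroot N M.lt_succ_self,
    add_sub_assoc]

lemma qBinom_two_mul_sub (q : ℂ) (L : ℕ) (a : ℤ) :
    qBinom (2 * L) (L - a) q = qBinom (2 * L) (L + a) q := by
  have h := qBinom_symm q (2 * L) (L + a)
  rwa [Nat.cast_mul, Nat.cast_ofNat, show 2 * (L : ℤ) - (L + a) = L - a by ring] at h

lemma one_add_pow_mul_qBinom_add_qBinom {q : ℂ} (hq : q ≠ 0)
    (hroot : ∀ k : ℕ, 0 < k → q ^ k ≠ 1) (K : ℕ) (a : ℤ) :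
    (1 + q ^ (K + 1)) * (qBinom (2 * K + 1) (K + a) q +
        q ^ a * qBinom (2 * K + 1) (K + 1 + a) q) =
      (1 + q ^ a) * qBinom (2 * K + 1 + 1) (K + 1 + a) q := by
  have habsorb := one_sub_pow_mul_qBinom hroot (2 * K + 1) (K + 1 + a)
  have habsorb' := one_sub_pow_mul_qBinom_sub_one hroot (2 * K + 1) (K + 1 + a)
  push_cast at habsorb habsorb'
  rw [show (K : ℤ) + 1 + a - 1 = K + a by ring] at habsorb'
  have hpow : q ^ a * q ^ (2 * (K : ℤ) + 1 + 1 - (K + 1 + a)) = q ^ (K + 1) := by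
    rw [← zpow_add₀ hq, ← zpow_natCast q, Nat.cast_succ]
    ring_nf
  have hpow' : q ^ ((K : ℤ) + 1 + a) = q ^ (K + 1) * q ^ a := by
    rw [zpow_add₀ hq, ← Nat.cast_succ, zpow_natCast]
  apply mul_left_cancel₀ (sub_ne_zero.mpr (hroot (K + 1) K.succ_pos).symm)
  linear_combination habsorb' + q ^ a * habsorb -
    qBinom (2 * K + 1 + 1) (K + 1 + a) q * (hpow + hpow')

lemma one_add_pow_mul_sum_qBinom_mul_qBinom {q : ℂ} (hq : q ≠ 0)
    (hroot : ∀ k : ℕ, 0 < k → q ^ k ≠ 1) (L : ℕ) (a : ℤ) :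
    (1 + q ^ L) * ∑ B ∈ Finset.range (L + 1),
        q ^ ((B : ℤ) * (B + a - 1)) * qBinom L B q * qBinom L (B + a) q =
      (1 + q ^ a) * qBinom (2 * L) (L - a) q := by
  rw [qBinom_two_mul_sub]
  obtain _ | K := L
  · obtain rfl | ha := eq_or_ne a 0
    · simp [qBinom_zero_zero]
    · simp [qBinom_eq_zero q (N := 0) (k := a) (by lia)]
  have hsum := sum_qBinom_mul_qBinom_succ hq hroot (K + 1) K a
  push_cast at hsum ⊢
  rw [hsum, show (K : ℤ) + 1 + K = 2 * K + 1 by ring, show (K : ℤ) + 1 + a - 1 = K + a by ring,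
    one_add_pow_mul_qBinom_add_qBinom hq hroot, show 2 * ((K : ℤ) + 1) = 2 * K + 1 + 1 by ring]

lemma zpow_ediv_two {G : Type*} [DivisionMonoid G] {q s : G} (hs : s ^ 2 = q) {k : ℤ}
    (hk : Even k) : q ^ (k / 2) = s ^ k := by
  conv_rhs => rw [← Int.two_mul_ediv_two_of_even hk, zpow_mul, zpow_ofNat, hs]

lemma qPoch_inv_inv {a q : ℂ} (ha : a ≠ 0) (hq : q ≠ 0) (n : ℕ) :
    qPoch a⁻¹ q⁻¹ n = ((-a) ^ n * q ^ (n * (n - 1) / 2))⁻¹ * qPoch a q n := by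
  have hfactor (j : ℕ) : 1 - a⁻¹ * q⁻¹ ^ j = (-a * q ^ j)⁻¹ * (1 - a * q ^ j) := by
    have := pow_ne_zero j hq
    rw [inv_pow]
    field_simp
    ring
  have hprod : ∏ j ∈ Finset.range n, q ^ j = q ^ (n * (n - 1) / 2) := by
    rw [Finset.prod_pow_eq_pow_sum, Finset.sum_range_id]
  simp only [qPoch, hfactor, Finset.prod_mul_distrib, Finset.prod_inv_distrib, Finset.prod_const,
    Finset.card_range, hprod]

lemma natCast_mul_pred_ediv_two (n : ℕ) : ((n * (n - 1) / 2 : ℕ) : ℤ) = (n : ℤ) * (n - 1) / 2 := by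
  cases n <;> simp

lemma ne_zero_of_sq_eq {M₀ : Type*} [MonoidWithZero M₀] {q s : M₀} (hs : s ^ 2 = q)
    (hq : q ≠ 0) : s ≠ 0 := by
  rintro rfl
  exact hq (hs ▸ zero_pow two_ne_zero)

lemma qPoch_inv_self {q s : ℂ} (hs : s ^ 2 = q) (hq : q ≠ 0) (n : ℕ) :
    qPoch q⁻¹ q⁻¹ n = ((-1) ^ n * s ^ ((n : ℤ) * (n + 1)))⁻¹ * qPoch q q n := by
  have hpow : q ^ n * q ^ (n * (n - 1) / 2) = s ^ ((n : ℤ) * (n + 1)) := by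
    rw [← zpow_natCast q (n * (n - 1) / 2), natCast_mul_pred_ediv_two,
      zpow_ediv_two hs (Int.even_mul_pred_self n), ← hs, ← pow_mul, ← zpow_natCast s (2 * n),
      ← zpow_add₀ (ne_zero_of_sq_eq hs hq)]
    push_cast
    ring_nf
  rw [qPoch_inv_inv hq hq, neg_pow, mul_assoc, hpow]

lemma qPochInvZ_inv {q s : ℂ} (hs : s ^ 2 = q) (hq : q ≠ 0) (n : ℤ) :
    qPochInvZ q⁻¹ n = (-1) ^ n * s ^ (n * (n + 1)) * qPochInvZ q n := by
  rcases lt_or_ge n 0 with hn | hn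
  · rw [qPochInvZ_of_neg _ hn, qPochInvZ_of_neg _ hn, mul_zero]
  · lift n to ℕ using hn
    rw [qPochInvZ_natCast, qPochInvZ_natCast, qPoch_inv_self hs hq, mul_inv, inv_inv, zpow_natCast]

lemma qTrinomial_eq_zero {L : ℕ} {a : ℤ} (h : L < |a|) (b : ℤ) (q : ℂ) :
    qTrinomial L b a q = 0 := by
  refine (tsum_congr fun n => ?_).trans tsum_zero
  by_contra hne
  simp only [mul_ne_zero_iff, ← ne_eq] at hne
  have hna := nonneg_of_qPochInvZ_ne_zero hne.1.2
  have hLna := nonneg_of_qPochInvZ_ne_zero hne.2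
  exact h.not_ge (abs_le.mpr (by lia))

lemma qTriT_one_eq_tsum {q s : ℂ} (hs : s ^ 2 = q) (hq : q ≠ 0) (L : ℕ) (a : ℤ) :
    qTriT 1 L a q s = ∑' n : ℕ, q ^ (((L : ℤ) - 2 * n - a) * (L - 2 * n - a - 1) / 2) *
      (qPoch q q L * qPochInvZ q n * qPochInvZ q (n + a) * qPochInvZ q (L - 2 * n - a)) := by
  have hs0 := ne_zero_of_sq_eq hs hq
  rw [qTriT, qTrinomial, ← tsum_mul_left]
  refine tsum_congr fun n => ?_
  have hsign : ((-1 : ℂ) ^ L)⁻¹ * (-1) ^ (n : ℤ) * (-1) ^ (n + a) * (-1) ^ (L - 2 * n - a) = 1 := by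
    rw [← zpow_natCast, ← zpow_neg]
    simp only [← zpow_add₀ (neg_ne_zero.mpr (one_ne_zero (α := ℂ)))]
    ring_nf
    rw [zpow_zero]
  have hbase : q⁻¹ ^ ((n : ℤ) * (n + (a - 1))) = s ^ (-(2 * ((n : ℤ) * (n + (a - 1))))) := by
    rw [zpow_neg, zpow_mul s 2, zpow_ofNat, hs, inv_zpow]
  have hpow : s ^ ((L : ℤ) * (L - 1) - a * (a - 1)) * s ^ (-(2 * ((n : ℤ) * (n + (a - 1))))) *
      (s ^ ((L : ℤ) * (L + 1)))⁻¹ * s ^ ((n : ℤ) * (n + 1)) * s ^ ((n + a) * (n + a + 1)) *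
      s ^ ((L - 2 * n - a) * (L - 2 * n - a + 1)) =
      s ^ (((L : ℤ) - 2 * n - a) * (L - 2 * n - a - 1)) := by
    rw [← zpow_neg]
    simp only [← zpow_add₀ hs0]
    ring_nf
  rw [hbase, zpow_ediv_two hs (Int.even_mul_pred_self _), qPoch_inv_self hs hq,
    qPochInvZ_inv hs hq, qPochInvZ_inv hs hq, qPochInvZ_inv hs hq, mul_inv]
  have hfactor := congrArg₂ (· * ·) hsign hpow
  linear_combination qPoch q q L * qPochInvZ q n * qPochInvZ q (n + a) *
    qPochInvZ q (L - 2 * n - a) * hfactor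

lemma qTriT_one_eq_sum {q s : ℂ} (hs : s ^ 2 = q) (hq : q ≠ 0) {L K : ℕ} (hLK : L < K) (a : ℤ) :
    qTriT 1 L a q s =
      ∑ n ∈ Finset.range K, q ^ (((L : ℤ) - 2 * n - a) * (L - 2 * n - a - 1) / 2) *
        (qPoch q q L * qPochInvZ q n * qPochInvZ q (n + a) * qPochInvZ q (L - 2 * n - a)) := by
  rw [qTriT_one_eq_tsum hs hq]
  refine tsum_eq_sum fun n hn => ?_
  by_contra hne
  simp only [mul_ne_zero_iff, ← ne_eq] at hne
  have hna := nonneg_of_qPochInvZ_ne_zero hne.2.1.2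
  have hLna := nonneg_of_qPochInvZ_ne_zero hne.2.2
  exact hn (Finset.mem_range.mpr (by lia))

/-- The summand of index `(i, n)` in the double sum that results from inserting the expansion of
`T_1(i, a)` into `∑ i, q ^ C(i, 2) * [L choose i] * T_1(i, a)`. The indices are integers so that
`i` can be shifted by `n + a`. -/
noncomputable def baileySummand (q : ℂ) (L : ℕ) (a i n : ℤ) : ℂ :=
  q ^ (i * (i - 1) / 2 + (i - 2 * n - a) * (i - 2 * n - a - 1) / 2) *
    (qPoch q q L * qPochInvZ q (L - i) * qPochInvZ q n * qPochInvZ q (n + a) *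
      qPochInvZ q (i - 2 * n - a))

lemma le_of_baileySummand_ne_zero {q : ℂ} {L : ℕ} {a i n : ℤ} (h : baileySummand q L a i n ≠ 0) :
    0 ≤ n ∧ 0 ≤ n + a ∧ 2 * n + a ≤ i ∧ i ≤ L := by
  simp only [baileySummand, mul_ne_zero_iff] at h
  have hn := nonneg_of_qPochInvZ_ne_zero h.2.1.1.2
  have hna := nonneg_of_qPochInvZ_ne_zero h.2.1.2
  have hi := nonneg_of_qPochInvZ_ne_zero h.2.2
  have hL := nonneg_of_qPochInvZ_ne_zero h.2.1.1.1.2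
  lia

lemma sum_range_natCast_eq_finsum {M : Type*} [AddCommMonoid M] {f : ℤ → M} {N : ℕ}
    (hf : ∀ x, f x ≠ 0 → 0 ≤ x ∧ x < N) : ∑ i ∈ Finset.range N, f i = ∑ᶠ x : ℤ, f x := by
  rw [finsum_eq_sum_of_support_subset (s := (Finset.range N).map Nat.castEmbedding), Finset.sum_map]
  · rfl
  · intro x hx
    obtain ⟨h0, hN⟩ := hf x hx
    simpa using ⟨x.toNat, by lia, by lia⟩

lemma sum_baileySummand_shift (q : ℂ) (L : ℕ) (a n : ℤ) :
    ∑ i ∈ Finset.range (L + 1), baileySummand q L a i n =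
      ∑ B ∈ Finset.range (L + 1), baileySummand q L a (B + (n + a)) n := by
  rw [sum_range_natCast_eq_finsum (f := fun i => baileySummand q L a i n),
    sum_range_natCast_eq_finsum (f := fun B => baileySummand q L a (B + (n + a)) n),
    ← finsum_comp_equiv (Equiv.addRight (n + a))]
  · rfl
  · intro B hB
    have := le_of_baileySummand_ne_zero hB
    lia
  · intro i hi
    have := le_of_baileySummand_ne_zero hi
    lia

lemma qBinom_mul_qTriT_one_eq_sum {q s : ℂ} (hs : s ^ 2 = q) (hq : q ≠ 0)
    (hroot : ∀ k : ℕ, 0 < k → q ^ k ≠ 1) {L i : ℕ} (hi : i ≤ L) (a : ℤ) :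
    q ^ (i * (i - 1) / 2) * qBinom L i q * qTriT 1 i a q s =
      ∑ n ∈ Finset.range (L + 1), baileySummand q L a i n := by
  rw [qTriT_one_eq_sum hs hq (Nat.lt_succ_of_le hi), Finset.mul_sum]
  refine Finset.sum_congr rfl fun n _ => ?_
  have hpoch := qPoch_self_ne_zero hroot i
  rw [baileySummand, zpow_add₀ hq, ← natCast_mul_pred_ediv_two, zpow_natCast, qBinom_natCast,
    qPochInvZ_natCast q i]
  field_simp

lemma zpow_mul_qBinom_mul_qBinom_eq_sum {q : ℂ} (hq : q ≠ 0)
    (hroot : ∀ k : ℕ, 0 < k → q ^ k ≠ 1) {L B : ℕ} (hB : B ≤ L) (a : ℤ) :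
    q ^ (a * (a - 1) / 2) * (q ^ ((B : ℤ) * (B + a - 1)) * qBinom L B q * qBinom L (B + a) q) =
      ∑ n ∈ Finset.range (L + 1), baileySummand q L a (B + (n + a)) n := by
  rw [mul_assoc, qBinom_mul_qBinom_add hq hroot hB, Finset.mul_sum, Finset.mul_sum]
  refine Finset.sum_congr rfl fun n _ => ?_
  have hexp : ((B : ℤ) + (n + a)) * (B + (n + a) - 1) / 2 + ((B : ℤ) - n) * (B - n - 1) / 2 =
      a * (a - 1) / 2 + B * (B + a - 1) + n * (n + a) := by
    have hi := Int.two_mul_ediv_two_of_even (Int.even_mul_pred_self ((B : ℤ) + (n + a)))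
    have hm := Int.two_mul_ediv_two_of_even (Int.even_mul_pred_self ((B : ℤ) - n))
    have ha := Int.two_mul_ediv_two_of_even (Int.even_mul_pred_self a)
    apply mul_left_cancel₀ (two_ne_zero (α := ℤ))
    linear_combination hi + hm - ha
  rw [baileySummand, show (B : ℤ) + (n + a) - 2 * n - a = B - n by ring, hexp, zpow_add₀ hq,
    zpow_add₀ hq, show (L : ℤ) - (B + (n + a)) = L - B - a - n by ring]
  ring

lemma sum_qBinom_mul_qTriT_one {q s : ℂ} (hs : s ^ 2 = q) (hq : q ≠ 0)
    (hroot : ∀ k : ℕ, 0 < k → q ^ k ≠ 1) (L : ℕ) (a : ℤ) :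
    ∑ i ∈ Finset.range (L + 1), q ^ (i * (i - 1) / 2) * qBinom L i q * qTriT 1 i a q s =
      q ^ (a * (a - 1) / 2) * ∑ B ∈ Finset.range (L + 1),
        q ^ ((B : ℤ) * (B + a - 1)) * qBinom L B q * qBinom L (B + a) q := by
  calc
    _ = ∑ i ∈ Finset.range (L + 1), ∑ n ∈ Finset.range (L + 1), baileySummand q L a i n :=
      Finset.sum_congr rfl fun i hi =>
        qBinom_mul_qTriT_one_eq_sum hs hq hroot (Finset.mem_range_succ_iff.mp hi) a
    _ = ∑ n ∈ Finset.range (L + 1), ∑ B ∈ Finset.range (L + 1),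
        baileySummand q L a (B + (n + a)) n := by
      rw [Finset.sum_comm]
      exact Finset.sum_congr rfl fun n _ => sum_baileySummand_shift q L a n
    _ = _ := by
      rw [Finset.sum_comm, Finset.mul_sum]
      exact Finset.sum_congr rfl fun B hB =>
        (zpow_mul_qBinom_mul_qBinom_eq_sum hq hroot (Finset.mem_range_succ_iff.mp hB) a).symm

lemma finsum_mul_qTriT_eq_sum {i L : ℕ} (hi : i ≤ L) (α : ℤ → ℂ) (n : ℤ) (q s : ℂ) :
    ∑ᶠ a : ℤ, α a * qTriT n i a q s = ∑ a ∈ Finset.Icc (-L : ℤ) L, α a * qTriT n i a q s := by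
  refine finsum_eq_sum_of_support_subset _ fun a ha => ?_
  contrapose! ha
  have hia : (i : ℤ) < |a| := by
    contrapose! ha
    simp only [Finset.coe_Icc, Set.mem_Icc]
    have := abs_le.mp ha
    lia
  rw [Function.notMem_support, qTriT, qTrinomial_eq_zero hia, mul_zero, mul_zero]

lemma one_add_pow_mul_sum_qBinom_mul_qTriT_one {q s : ℂ} (hs : s ^ 2 = q) (hq : q ≠ 0)
    (hroot : ∀ k : ℕ, 0 < k → q ^ k ≠ 1) (L : ℕ) (a : ℤ) :
    (1 + q ^ L) *
        ∑ i ∈ Finset.range (L + 1), q ^ (i * (i - 1) / 2) * qBinom L i q * qTriT 1 i a q s =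
      (1 + q ^ a) * q ^ (a * (a - 1) / 2) * qBinom (2 * L) (L - a) q := by
  rw [sum_qBinom_mul_qTriT_one hs hq hroot, mul_left_comm,
    one_add_pow_mul_sum_qBinom_mul_qBinom hq hroot, mul_left_comm, mul_assoc]

theorem bailey_type_T1_general (q s : ℂ) (hs : s ^ 2 = q) (hq : q ≠ 0)
    (hroot : ∀ k : ℕ, 0 < k → q ^ k ≠ 1) (α : ℤ → ℂ)
    (F : ℕ → ℂ) (hF : ∀ L : ℕ, F L = ∑ᶠ a : ℤ, α a * qTriT 1 L a q s) (L : ℕ) :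
    (1 + q ^ L) * (∑' i : ℕ, q ^ (i * (i - 1) / 2) * qBinom (L : ℤ) (i : ℤ) q * F i) =
    ∑ᶠ a : ℤ, α a * (1 + q ^ a) * q ^ (a * (a - 1) / 2) * qBinom (2 * (L : ℤ)) ((L : ℤ) - a) q := by
  calc
    _ = (1 + q ^ L) * ∑ i ∈ Finset.range (L + 1), q ^ (i * (i - 1) / 2) * qBinom L i q *
        ∑ a ∈ Finset.Icc (-L : ℤ) L, α a * qTriT 1 i a q s := by
      have hvanish : ∀ i ∉ Finset.range (L + 1),
          q ^ (i * (i - 1) / 2) * qBinom L i q * F i = 0 := fun i hi => by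
        rw [qBinom_eq_zero q (.inr (by simpa using hi)), mul_zero, zero_mul]
      rw [tsum_eq_sum hvanish]
      congr! 2 with i hi
      rw [hF, finsum_mul_qTriT_eq_sum (Finset.mem_range_succ_iff.mp hi)]
    _ = ∑ a ∈ Finset.Icc (-L : ℤ) L, α a * ((1 + q ^ L) *
        ∑ i ∈ Finset.range (L + 1), q ^ (i * (i - 1) / 2) * qBinom L i q * qTriT 1 i a q s) := by
      simp only [Finset.mul_sum]
      rw [Finset.sum_comm]
      congr! 2
      ring
    _ = ∑ a ∈ Finset.Icc (-L : ℤ) L,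
        α a * (1 + q ^ a) * q ^ (a * (a - 1) / 2) * qBinom (2 * L) (L - a) q := by
      congr! 1 with a
      rw [one_add_pow_mul_sum_qBinom_mul_qTriT_one hs hq hroot]
      ring
    _ = _ := by
      refine (finsum_eq_sum_of_support_subset _ fun a ha => ?_).symm
      contrapose! ha
      rw [Function.notMem_support, qBinom_eq_zero q (by grind), mul_zero]

theorem bailey_type_T1 (q s : ℂ) (hs : s ^ 2 = q) (hq : q ≠ 0) (hroot : ∀ k : ℕ, 0 < k → q ^ k ≠ 1)
    (α : ℤ → ℂ) (hα : (Function.support α).Finite)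
    (F : ℕ → ℂ) (hF : ∀ L : ℕ, F L = ∑ᶠ a : ℤ, α a * qTriT 1 L a q s) (L : ℕ) :
    (1 + q ^ L) * (∑' i : ℕ, q ^ (i * (i - 1) / 2) * qBinom (L : ℤ) (i : ℤ) q * F i) =
    ∑ᶠ a : ℤ, α a * (1 + q ^ a) * q ^ (a * (a - 1) / 2) * qBinom (2 * (L : ℤ)) ((L : ℤ) - a) q := by
  
  exact bailey_type_T1_general q s hs hq hroot α F hF L
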